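/- There exists a computable enumeration without repetitions (ψ_x) of all unary partial computable functions such that ψ_{2x+1}(y) = x for all x, y ∈ ω. -/

import Mathlib

open Nat.Partrec (Code)
open Nat.Partrec.Code Encodable

namespace FriedbergNumbering

/-- An infinite computable set is the range of a computable injection. -/
theorem exists_computable_injective_range_eq {α : Type*} [Primcodable α] {p : α → Prop}
    (hp : ComputablePred p) (hinf : {x | p x}.Infinite) :
    ∃ e : ℕ → α, Computable e ∧ Function.Injective e ∧ ∀ x, p x ↔ ∃ n, e n = x := by
  obtain ⟨_, hp⟩ := hp
  obtain ⟨x₀, -⟩ := hinf.nonempty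
  obtain ⟨b, hb, hb_iff⟩ : ∃ b : ℕ → Bool, Computable b ∧
      ∀ n, b n = true ↔ ∃ x, encode x = n ∧ p x := by
    have hb : Computable fun n : ℕ =>
        Option.casesOn (motive := fun _ => Bool) (decode₂ α n) false fun x => decide (p x) :=
      Computable.option_casesOn (f := fun _ => false) (g := fun _ x => decide (p x))
        Primrec.decode₂.to_comp (Computable.const _) (hp.comp Computable.snd).to₂
    refine ⟨_, hb, fun n => ?_⟩
    rcases h : decode₂ α n with _ | x
    · have hne (x : α) (hx : encode x = n) : False := by simp [← hx] at h
      exact ⟨fun hf => by simp at hf, fun ⟨x, hx, _⟩ => (hne x hx).elim⟩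
    · obtain rfl : encode x = n := decode₂_eq_some.1 h
      simp
  let q : ℕ → Prop := fun n => b n = true
  have hq : (Set.ofPred q).Infinite := by
    refine (hinf.image encode_injective.injOn).mono ?_
    rintro _ ⟨x, hx, rfl⟩
    exact (hb_iff _).2 ⟨x, rfl, hx⟩
  have : DecidablePred q := fun n => inferInstanceAs (Decidable (b n = true))
  have hcount : Computable (Nat.count q) := by
    have h : Computable fun n : ℕ => Nat.rec (motive := fun _ => ℕ) 0
        (fun m c => bif b m then c + 1 else c) n :=
      Computable.nat_rec Computable.id (Computable.const 0)
        (Computable.cond (hb.comp (Computable.fst.comp Computable.snd))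
          (Computable.succ.comp (Computable.snd.comp Computable.snd))
          (Computable.snd.comp Computable.snd)).to₂
    refine h.of_eq fun n => ?_
    induction n with
    | zero => simp
    | succ n ih =>
      by_cases hbn : b n = true <;> simp [Nat.count_succ, ih, q, hbn]
  have hnth : Computable (Nat.nth q) := by
    have h : Partrec fun k : ℕ => Nat.rfind fun n =>
        (Part.some (b n && decide (Nat.count q n = k)) : Part Bool) := by
      refine Partrec.rfind (Computable.partrec ?_)
      exact Primrec.and.to_comp.comp (hb.comp Computable.snd)
        (Primrec.eq.decide.to_comp.comp (hcount.comp Computable.snd) Computable.fst)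
    refine h.of_eq_tot fun k => ?_
    have hmem : b (Nat.nth q k) = true := Nat.nth_mem_of_infinite hq k
    refine Nat.mem_rfind.2 ⟨?_, ?_⟩
    · simp [hmem, Nat.count_nth_of_infinite hq]
    · intro m hm
      suffices b m = true → Nat.count q m ≠ k by simpa using this
      rintro hbm rfl
      exact hm.ne (Nat.nth_count hbm).symm
  refine ⟨fun k => (decode₂ α (Nat.nth q k)).getD x₀,
    Computable.option_getD (Primrec.decode₂.to_comp.comp hnth) (Computable.const _), ?_, ?_⟩
  · intro k l hkl
    obtain ⟨x, hx, -⟩ := (hb_iff _).1 (Nat.nth_mem_of_infinite hq k)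
    obtain ⟨y, hy, -⟩ := (hb_iff _).1 (Nat.nth_mem_of_infinite hq l)
    apply Nat.nth_injective hq
    simp only [← hx, ← hy, encodek₂, Option.getD_some] at hkl ⊢
    rw [hkl]
  · intro x
    constructor
    · intro hx
      refine ⟨Nat.count q (encode x), ?_⟩
      have : q (encode x) := (hb_iff _).2 ⟨x, rfl, hx⟩
      simp [Nat.nth_count this]
    · rintro ⟨k, rfl⟩
      obtain ⟨x, hx, hpx⟩ := (hb_iff _).1 (Nat.nth_mem_of_infinite hq k)
      simpa [← hx] using hpx

theorem rfindOpt_eq_some_of_first {α : Type*} {f : ℕ → Option α} {n : ℕ} {v : α}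
    (hn : f n = some v) (hlt : ∀ m < n, f m = none) : Nat.rfindOpt f = Part.some v := by
  have h : n ∈ Nat.rfind (fun m => Part.some (f m).isSome : ℕ →. Bool) :=
    Nat.mem_rfind.2 ⟨by simp [hn], fun {m} hm => by simp [hlt m hm]⟩
  refine Part.eq_some_iff.2 (Part.mem_bind_iff.2 ⟨n, h, ?_⟩)
  simp [hn]

/-- `f` is total and eventually constant. -/
def EventuallyConst (f : ℕ →. ℕ) : Prop :=
  ∃ (L : List ℕ) (d : ℕ), ∀ x, f x = Part.some (L[x]?.getD d)

theorem getD_append_singleton_self (L : List ℕ) (d x : ℕ) :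
    (L ++ [d])[x]?.getD d = L[x]?.getD d := by
  rcases lt_trichotomy x L.length with h | rfl | h
  · simp [List.getElem?_append_left h]
  · simp
  · rw [List.getElem?_eq_none (by simp; omega), List.getElem?_eq_none (by omega)]

theorem EventuallyConst.eq_const_or {f : ℕ →. ℕ} (hf : EventuallyConst f) :
    (∃ d, ∀ x, f x = Part.some d) ∨
      ∃ (L : List ℕ) (k d : ℕ), k ≠ d ∧ ∀ x : ℕ, f x = Part.some ((L ++ [k])[x]?.getD d) := by
  obtain ⟨L, d, h⟩ := hf
  induction L using List.reverseRecOn with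
  | nil => exact .inl ⟨d, by simpa using h⟩
  | append_singleton L k ih =>
    by_cases hk : k = d
    · subst hk
      exact ih fun x => by rw [h, getD_append_singleton_self]
    · exact .inr ⟨L, k, d, hk, h⟩

theorem not_const_of_ne {L : List ℕ} {k d e : ℕ} (hk : k ≠ d)
    (h : ∀ x : ℕ, (L ++ [k])[x]?.getD d = e) : False := by
  have h₁ := h L.length
  have h₂ := h (L.length + 1)
  rw [List.getElem?_eq_none (by simp)] at h₂
  simp at h₁ h₂
  omega

theorem normalForm_length_le {L L' : List ℕ} {k d k' d' : ℕ} (hk' : k' ≠ d')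
    (hd : d = d') (h : ∀ x : ℕ, (L ++ [k])[x]?.getD d = (L' ++ [k'])[x]?.getD d') :
    L'.length ≤ L.length := by
  by_contra! hlt
  have := h L'.length
  rw [List.getElem?_eq_none (by simp; omega)] at this
  simp at this
  omega

theorem normalForm_injective {L L' : List ℕ} {k d k' d' : ℕ} (hk : k ≠ d) (hk' : k' ≠ d')
    (h : ∀ x : ℕ, (L ++ [k])[x]?.getD d = (L' ++ [k'])[x]?.getD d') :
    L = L' ∧ k = k' ∧ d = d' := by
  have hd : d = d' := by
    have := h (L.length + L'.length + 1)
    rwa [List.getElem?_eq_none (by simp), List.getElem?_eq_none (by simp)] at this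
  have hlen : L.length = L'.length :=
    le_antisymm (normalForm_length_le hk hd.symm fun x => (h x).symm)
      (normalForm_length_le hk' hd h)
  have hL : L ++ [k] = L' ++ [k'] := by
    refine List.ext_getElem (by simp [hlen]) fun x h₁ h₂ => ?_
    simpa [List.getElem?_eq_getElem h₁, List.getElem?_eq_getElem h₂] using h x
  obtain ⟨h₁, h₂⟩ := List.append_inj hL hlen
  exact ⟨h₁, by simpa using h₂, hd⟩

/-- `c` restricted to the complement of `{z}`. -/
def puncture (c : Code) (z : ℕ) : ℕ →. ℕ :=
  fun x => if x = z then Part.none else eval c x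

/-- `n` codes an argument `y` and a number of steps witnessing that `c` takes different values
at `y` and `y + 1`. -/
def ChangesAt (c : Code) (n : ℕ) : Prop :=
  (evaln n.unpair.2 c n.unpair.1).isSome ∧ (evaln n.unpair.2 c (n.unpair.1 + 1)).isSome ∧
    evaln n.unpair.2 c n.unpair.1 ≠ evaln n.unpair.2 c (n.unpair.1 + 1)

instance (c : Code) (n : ℕ) : Decidable (ChangesAt c n) := by
  unfold ChangesAt
  infer_instance

/-- `c` restricted to the arguments below some point where its value changes. -/
def belowChange (c : Code) : ℕ →. ℕ := fun x =>
  Nat.rfindOpt fun n => if x < n.unpair.1 ∧ ChangesAt c n then evaln n.unpair.2 c x else none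

theorem mem_belowChange {c : Code} {x v : ℕ} :
    v ∈ belowChange c x ↔ v ∈ eval c x ∧
      ∃ y > x, ∃ a ∈ eval c y, ∃ b ∈ eval c (y + 1), a ≠ b := by
  have forward {v : ℕ} (hv : v ∈ belowChange c x) : v ∈ eval c x ∧
      ∃ y > x, ∃ a ∈ eval c y, ∃ b ∈ eval c (y + 1), a ≠ b := by
    obtain ⟨n, hn⟩ := Nat.rfindOpt_spec hv
    split_ifs at hn with h
    · obtain ⟨hx, h₁, h₂, h₃⟩ := h
      obtain ⟨a, ha⟩ := Option.isSome_iff_exists.1 h₁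
      obtain ⟨b, hb⟩ := Option.isSome_iff_exists.1 h₂
      exact ⟨evaln_sound hn, _, hx, a, evaln_sound ha, b, evaln_sound hb,
        fun hab => h₃ (by rw [ha, hb, hab])⟩
    · simp at hn
  refine ⟨forward, ?_⟩
  rintro ⟨hv, y, hy, a, ha, b, hb, hab⟩
  obtain ⟨s₁, h₁⟩ := evaln_complete.1 hv
  obtain ⟨s₂, h₂⟩ := evaln_complete.1 ha
  obtain ⟨s₃, h₃⟩ := evaln_complete.1 hb
  let s := max s₁ (max s₂ s₃)
  have h₁ : evaln s c x = some v := evaln_mono (by simp [s]) h₁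
  have h₂ : evaln s c y = some a := evaln_mono (by simp [s]) h₂
  have h₃ : evaln s c (y + 1) = some b := evaln_mono (by simp [s]) h₃
  have hdom : (belowChange c x).Dom := by
    refine Nat.rfindOpt_dom.2 ⟨Nat.pair y s, v, ?_⟩
    simp [ChangesAt, h₁, h₂, h₃, hab, hy]
  obtain ⟨w, hw⟩ := Part.dom_iff_mem.1 hdom
  exact Part.mem_unique (forward hw).1 hv ▸ hw

theorem not_eventuallyConst_puncture (c : Code) (z : ℕ) : ¬ EventuallyConst (puncture c z) := by
  rintro ⟨L, d, h⟩
  simpa [puncture] using h z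

theorem not_eventuallyConst_belowChange (c : Code) : ¬ EventuallyConst (belowChange c) := by
  rintro ⟨L, d, h⟩
  have hmem (x : ℕ) : L[x]?.getD d ∈ belowChange c x := by simp [h]
  obtain ⟨-, y, hy, a, ha, b, hb, hab⟩ := mem_belowChange.1 (hmem L.length)
  have h₁ := Part.mem_unique ha (mem_belowChange.1 (hmem y)).1
  have h₂ := Part.mem_unique hb (mem_belowChange.1 (hmem (y + 1))).1
  rw [List.getElem?_eq_none (by omega)] at h₁ h₂
  exact hab (h₁.trans h₂.symm)

theorem eq_puncture_or_eq_belowChange {c : Code} (hc : ¬ EventuallyConst (eval c)) :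
    (∃ z, puncture c z = eval c) ∨ belowChange c = eval c := by
  by_cases h : ∃ z, ¬ (eval c z).Dom
  · obtain ⟨z, hz⟩ := h
    refine .inl ⟨z, funext fun x => ?_⟩
    rw [puncture]
    split_ifs with hx
    · rw [hx, Part.eq_none_iff'.2 hz]
    · rfl
  · push Not at h
    refine .inr (funext fun x => Part.ext fun v => ?_)
    rw [mem_belowChange, and_iff_left_iff_imp]
    intro _
    by_contra! hx
    refine hc ⟨(List.range (x + 1)).map fun y => (eval c y).get (h y),
      (eval c (x + 1)).get (h _), fun y => ?_⟩
    rcases lt_or_ge y (x + 1) with hy | hy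
    · simp [hy]
    · have : (eval c y).get (h y) = (eval c (x + 1)).get (h _) := by
        induction y, hy using Nat.le_induction with
        | base => rfl
        | succ y hy ih =>
          rw [← ih]
          exact (hx y (by omega) _ (Part.get_mem _) _ (Part.get_mem _)).symm
      rw [List.getElem?_eq_none (by simpa using hy)]
      simp [← this]

theorem partrec_puncture : Partrec fun q : (Code × ℕ) × ℕ => puncture q.1.1 q.1.2 q.2 := by
  have h : Computable fun q : (Code × ℕ) × ℕ => decide (q.2 = q.1.2) :=
    (Primrec.eq.decide.comp Primrec.snd (Primrec.snd.comp Primrec.fst)).to_comp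
  refine (Partrec.cond h Partrec.none (eval_part.comp (Computable.fst.comp Computable.fst)
    Computable.snd)).of_eq fun q => ?_
  by_cases hq : q.2 = q.1.2 <;> simp [puncture, hq]

theorem primrecPred_changesAt : PrimrecPred fun q : Code × ℕ => ChangesAt q.1 q.2 := by
  have hs : Primrec fun q : Code × ℕ => q.2.unpair.2 :=
    Primrec.snd.comp (Primrec.unpair.comp Primrec.snd)
  have hy : Primrec fun q : Code × ℕ => q.2.unpair.1 :=
    Primrec.fst.comp (Primrec.unpair.comp Primrec.snd)
  have h₁ : Primrec fun q : Code × ℕ => evaln q.2.unpair.2 q.1 q.2.unpair.1 :=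
    primrec_evaln.comp ((hs.pair Primrec.fst).pair hy)
  have h₂ : Primrec fun q : Code × ℕ => evaln q.2.unpair.2 q.1 (q.2.unpair.1 + 1) :=
    primrec_evaln.comp ((hs.pair Primrec.fst).pair (Primrec.succ.comp hy))
  exact (Primrec.eq.comp (Primrec.option_isSome.comp h₁) (Primrec.const true)).and
    ((Primrec.eq.comp (Primrec.option_isSome.comp h₂) (Primrec.const true)).and
      (Primrec.eq.comp h₁ h₂).not)

theorem partrec_belowChange : Partrec₂ belowChange := by
  refine Partrec.rfindOpt (Primrec.to_comp ?_)
  have hn : Primrec fun q : (Code × ℕ) × ℕ => q.2.unpair := Primrec.unpair.comp Primrec.snd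
  exact Primrec.ite
    ((Primrec.nat_lt.comp (Primrec.snd.comp Primrec.fst) (Primrec.fst.comp hn)).and
      (primrecPred_changesAt.comp ((Primrec.fst.comp Primrec.fst).pair Primrec.snd)))
    (primrec_evaln.comp (((Primrec.snd.comp hn).pair (Primrec.fst.comp Primrec.fst)).pair
      (Primrec.snd.comp Primrec.fst))) (Primrec.const none)

/-- The `i`-th function in the sequence of partial functions computed by `c`. -/
def row (c : Code) (i : ℕ) : ℕ →. ℕ := fun x => eval c (Nat.pair i x)

theorem exists_code_not_eventuallyConst :
    ∃ c : Code, (∀ i, ¬ EventuallyConst (row c i)) ∧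
      ∀ f : ℕ →. ℕ, Partrec f → ¬ EventuallyConst f → ∃ i, row c i = f := by
  let F : ℕ → ℕ →. ℕ := fun i => match i.unpair.2 with
    | 0 => belowChange (Denumerable.ofNat Code i.unpair.1)
    | z + 1 => puncture (Denumerable.ofNat Code i.unpair.1) z
  have hF : Partrec₂ F := by
    have hc : Computable fun q : ℕ × ℕ => Denumerable.ofNat Code q.1.unpair.1 :=
      (Computable.ofNat Code).comp (Computable.fst.comp (Computable.unpair.comp Computable.fst))
    have hz : Computable fun q : ℕ × ℕ => q.1.unpair.2 :=
      Computable.snd.comp (Computable.unpair.comp Computable.fst)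
    have h₀ : Computable fun q : ℕ × ℕ => decide (q.1.unpair.2 = 0) :=
      Primrec.eq.decide.to_comp.comp hz (Computable.const 0)
    refine (Partrec.cond h₀ (partrec_belowChange.comp hc Computable.snd)
      (partrec_puncture.comp ((hc.pair (Computable.pred.comp hz)).pair
        Computable.snd))).of_eq fun q => ?_
    cases h : q.1.unpair.2 <;> simp [F, h]
  obtain ⟨c, hc⟩ := exists_code.1 (Partrec₂.unpaired'.2 hF)
  have hrow (i : ℕ) : row c i = F i := by
    funext x
    simp [row, hc]
  refine ⟨c, fun i => ?_, fun f hf hne => ?_⟩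
  · rw [hrow]
    simp only [F]
    split
    · exact not_eventuallyConst_belowChange _
    · exact not_eventuallyConst_puncture _ _
  · obtain ⟨e, rfl⟩ := exists_code.1 (Partrec.nat_iff.1 hf)
    rcases eq_puncture_or_eq_belowChange hne with ⟨z, hz⟩ | h
    · exact ⟨Nat.pair (encode e) (z + 1), by rw [hrow]; simp [F, hz]⟩
    · exact ⟨Nat.pair (encode e) 0, by rw [hrow]; simp [F, h]⟩

theorem primrecRel_exists_lt {β : Type*} [Primcodable β] {R : ℕ → β → Prop}
    (hR : PrimrecRel R) : PrimrecRel fun n y => ∃ x < n, R x y :=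
  (hR.exists_mem_list.comp (Primrec.list_range.comp Primrec.fst) Primrec.snd).of_eq (by simp)

theorem primrecRel_forall_lt {β : Type*} [Primcodable β] {R : ℕ → β → Prop}
    (hR : PrimrecRel R) : PrimrecRel fun n y => ∀ x < n, R x y :=
  (hR.forall_mem_list.comp (Primrec.list_range.comp Primrec.fst) Primrec.snd).of_eq (by simp)

/-- Counts the stages before `s` at which row `i` was found to agree with an earlier row on a
longer initial segment than ever before. -/
def agreement (c : Code) (i s : ℕ) : ℕ :=
  Nat.rec 0 (fun s n => if ∃ j < i, ∀ x < n,
    evaln s c (Nat.pair j x) = evaln s c (Nat.pair i x) then n + 1 else n) s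

theorem agreement_succ (c : Code) (i s : ℕ) : agreement c i (s + 1) =
    if ∃ j < i, ∀ x < agreement c i s,
      evaln s c (Nat.pair j x) = evaln s c (Nat.pair i x)
    then agreement c i s + 1 else agreement c i s :=
  rfl

theorem primrec_agreement (c : Code) : Primrec₂ (agreement c) := by
  have h₁ : PrimrecRel fun (x : ℕ) (q : ℕ × ℕ × ℕ) =>
      evaln q.2.2 c (Nat.pair q.1 x) = evaln q.2.2 c (Nat.pair q.2.1 x) := by
    have h (f : ℕ × (ℕ × ℕ × ℕ) → ℕ) (hf : Primrec f) :
        Primrec fun a : ℕ × (ℕ × ℕ × ℕ) => evaln a.2.2.2 c (Nat.pair (f a) a.1) :=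
      primrec_evaln.comp (((Primrec.snd.comp (Primrec.snd.comp Primrec.snd)).pair
        (Primrec.const c)).pair (Primrec₂.natPair.comp hf Primrec.fst))
    exact Primrec.eq.comp (h _ (Primrec.fst.comp Primrec.snd))
      (h _ (Primrec.fst.comp (Primrec.snd.comp Primrec.snd)))
  have h₂ : PrimrecRel fun (j : ℕ) (q : ℕ × ℕ × ℕ) => ∀ x < q.2.2,
      evaln q.2.1 c (Nat.pair j x) = evaln q.2.1 c (Nat.pair q.1 x) := by
    have h := primrecRel_forall_lt h₁
    exact h.comp (Primrec.snd.comp (Primrec.snd.comp Primrec.snd))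
      (Primrec.fst.pair ((Primrec.fst.comp Primrec.snd).pair
        (Primrec.fst.comp (Primrec.snd.comp Primrec.snd))))
  have h₃ : PrimrecPred fun q : (ℕ × ℕ) × ℕ × ℕ => ∃ j < q.1.1, ∀ x < q.2.2,
      evaln q.2.1 c (Nat.pair j x) = evaln q.2.1 c (Nat.pair q.1.1 x) := by
    have h := primrecRel_exists_lt h₂
    exact h.comp (Primrec.fst.comp Primrec.fst)
      ((Primrec.fst.comp Primrec.fst).pair Primrec.snd)
  exact Primrec.nat_rec' Primrec.snd (Primrec.const 0)
    (Primrec.ite h₃ (Primrec.succ.comp (Primrec.snd.comp Primrec.snd))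
      (Primrec.snd.comp Primrec.snd)).to₂

theorem agreement_le (c : Code) (i s : ℕ) : agreement c i s ≤ s := by
  induction s with
  | zero => exact le_rfl
  | succ s ih =>
    rw [agreement_succ]
    split_ifs <;> omega

theorem agreement_monotone (c : Code) (i : ℕ) : Monotone (agreement c i) :=
  monotone_nat_of_le_succ fun s => by
    rw [agreement_succ]
    split_ifs <;> omega

theorem evaln_stabilizes (c : Code) (n : ℕ) :
    ∃ S, ∀ s ≥ S, ∀ v, v ∈ evaln s c n ↔ v ∈ eval c n := by
  by_cases h : ∃ v, v ∈ eval c n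
  · obtain ⟨v, hv⟩ := h
    obtain ⟨S, hS⟩ := evaln_complete.1 hv
    refine ⟨S, fun s hs w => ⟨evaln_sound, fun hw => ?_⟩⟩
    rw [Part.mem_unique hw hv]
    exact evaln_mono hs hS
  · exact ⟨0, fun s _ v => ⟨evaln_sound, fun hv => (h ⟨v, hv⟩).elim⟩⟩

theorem exists_agreement_gt {c : Code} {i j : ℕ} (hj : j < i) (h : row c j = row c i) (t : ℕ) :
    ∃ s > t, agreement c i t < agreement c i s := by
  choose S hS using evaln_stabilizes c
  set n := agreement c i t with hn
  let s := t + (Finset.range n).sup fun x => max (S (Nat.pair j x)) (S (Nat.pair i x))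
  have hts : n ≤ agreement c i s := agreement_monotone c i (by omega)
  refine ⟨s + 1, by omega, ?_⟩
  rcases hts.lt_or_eq with hlt | heq
  · exact hlt.trans_le (agreement_monotone c i (by omega))
  · rw [agreement_succ, ← heq, if_pos]
    · exact n.lt_succ_self
    · refine ⟨j, hj, fun x hx => Option.ext fun v => ?_⟩
      have hle := Finset.le_sup (f := fun x => max (S (Nat.pair j x)) (S (Nat.pair i x)))
        (Finset.mem_range.2 hx)
      simp only [max_le_iff] at hle
      have h₁ := hS (Nat.pair j x) s (by omega) v
      have h₂ := hS (Nat.pair i x) s (by omega) v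
      have h₃ : eval c (Nat.pair j x) = eval c (Nat.pair i x) := congrFun h x
      rw [h₃] at h₁
      exact h₁.trans h₂.symm

theorem agreement_bounded {c : Code} {i : ℕ} (h : ∀ j < i, row c j ≠ row c i) :
    ∃ N, ∀ s, agreement c i s ≤ N := by
  choose S hS using evaln_stabilizes c
  have hdiff (j : ℕ) : ∃ x, j < i → eval c (Nat.pair j x) ≠ eval c (Nat.pair i x) := by
    by_cases hj : j < i
    · obtain ⟨x, hx⟩ := Function.ne_iff.1 (h j hj)
      exact ⟨x, fun _ => hx⟩
    · exact ⟨0, fun hj' => (hj hj').elim⟩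
  choose d hd using hdiff
  let b : ℕ → ℕ := fun j => max (d j + 1) (max (S (Nat.pair j (d j))) (S (Nat.pair i (d j))))
  let N := (Finset.range i).sup b
  refine ⟨N, fun s => ?_⟩
  induction s with
  | zero => exact Nat.zero_le _
  | succ s ih =>
    rw [agreement_succ]
    split_ifs with hs
    · by_contra! hlt
      obtain ⟨j, hj, hagree⟩ := hs
      have hle : b j ≤ N := Finset.le_sup (Finset.mem_range.2 hj)
      have hsN := agreement_le c i s
      simp only [b, max_le_iff] at hle
      refine hd j hj (Part.ext fun v => ?_)
      rw [← hS _ s (by omega), ← hS _ s (by omega), hagree (d j) (by omega)]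
    · exact ih

/-- Row `i` restarts at stage `s` when new evidence is found that it repeats an earlier row. -/
def Restarts (c : Code) (i s : ℕ) : Prop :=
  s = 0 ∨ agreement c i s ≠ agreement c i (s - 1)

instance (c : Code) (i s : ℕ) : Decidable (Restarts c i s) := by
  unfold Restarts
  infer_instance

theorem primrecRel_restarts (c : Code) : PrimrecRel (Restarts c) :=
  (Primrec.eq.comp Primrec.snd (Primrec.const 0)).or
    (Primrec.eq.comp (primrec_agreement c)
      ((primrec_agreement c).comp Primrec.fst (Primrec.pred.comp Primrec.snd))).not

theorem agreement_eq_of_not_restarts {c : Code} {i t s : ℕ} (hts : t ≤ s)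
    (h : ∀ r, t < r → r ≤ s → ¬ Restarts c i r) : agreement c i s = agreement c i t := by
  induction s, hts using Nat.le_induction with
  | base => rfl
  | succ s hts ih =>
    rw [← ih fun r h₁ h₂ => h r h₁ (by omega)]
    have := h (s + 1) (by omega) le_rfl
    simp only [Restarts, not_or, not_not] at this
    exact this.2

theorem exists_restarts_gt {c : Code} {i j : ℕ} (hj : j < i) (h : row c j = row c i) (t : ℕ) :
    ∃ s > t, Restarts c i s := by
  by_contra! hno
  obtain ⟨s, hs, hlt⟩ := exists_agreement_gt hj h t
  exact hlt.ne' (agreement_eq_of_not_restarts hs.le fun r hr _ => hno r hr)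

theorem exists_last_restart {c : Code} {i : ℕ} (h : ∀ j < i, row c j ≠ row c i) :
    ∃ t, Restarts c i t ∧ ∀ s > t, ¬ Restarts c i s := by
  obtain ⟨N, hN⟩ := agreement_bounded h
  by_contra! hno
  have hgrow (n : ℕ) : ∃ t, Restarts c i t ∧ n ≤ agreement c i t := by
    induction n with
    | zero => exact ⟨0, .inl rfl, Nat.zero_le _⟩
    | succ n ih =>
      obtain ⟨t, ht, hnt⟩ := ih
      obtain ⟨s, hs, hrs⟩ := hno t ht
      refine ⟨s, hrs, ?_⟩
      have h₁ := agreement_monotone c i (show t ≤ s - 1 by omega)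
      have h₂ := agreement_monotone c i (show s - 1 ≤ s by omega)
      rcases hrs with h0 | hne
      · omega
      · omega
  obtain ⟨t, -, ht⟩ := hgrow (N + 1)
  have := hN t
  omega

/-- The total extension by `0` of row `i` at stage `s`, below `s`. -/
def snapshot (c : Code) (i s : ℕ) : List ℕ :=
  (List.range s).map fun x => (evaln s c (Nat.pair i x)).getD 0

theorem length_snapshot (c : Code) (i s : ℕ) : (snapshot c i s).length = s := by
  simp [snapshot]

theorem primrec_snapshot (c : Code) : Primrec₂ (snapshot c) :=
  Primrec.list_map (Primrec.list_range.comp Primrec.snd)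
    (Primrec.option_getD.comp
      (primrec_evaln.comp (((Primrec.snd.comp Primrec.fst).pair (Primrec.const c)).pair
        (Primrec₂.natPair.comp (Primrec.fst.comp Primrec.fst) Primrec.snd)))
      (Primrec.const 0)).to₂

theorem snapshot_getElem? {c : Code} {i r s x v : ℕ} (hrs : r ≤ s)
    (h : evaln r c (Nat.pair i x) = some v) : (snapshot c i s)[x]? = some v := by
  have hs : evaln s c (Nat.pair i x) = some v := evaln_mono hrs h
  have hx : x < s := (Nat.right_le_pair i x).trans_lt (evaln_bound hs)
  simp [snapshot, hx, hs]

/-- Indices of the auxiliary numbering: `Sum.inl (i, t)` follows row `i` from a restart at `t`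
on, and `Sum.inr (L, k, d)` stands for the function with values `L`, `k`, `d`, `d`, .... -/
abbrev Index : Type := (ℕ × ℕ) ⊕ (List ℕ × ℕ × ℕ)

/-- The auxiliary numbering. A follower of row `i` born at stage `t` computes row `i` until the
next restart, at which it becomes an eventually zero function marked by `(i, t)`. -/
def follow (c : Code) : Index → ℕ →. ℕ
  | .inl (i, t) => fun x => Nat.rfindOpt fun s =>
      if t < s ∧ Restarts c i s then
        some ((snapshot c i s ++ [Nat.pair i t + 1])[x]?.getD 0)
      else evaln s c (Nat.pair i x)
  | .inr (L, k, d) => fun x => Part.some ((L ++ [k])[x]?.getD d)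

/-- `D` is the first restart of row `i` after `t`. -/
def NextRestart (c : Code) (i t D : ℕ) : Prop :=
  (t < D ∧ Restarts c i D) ∧ ∀ r < D, ¬ (t < r ∧ Restarts c i r)

theorem nextRestart_or (c : Code) (i t : ℕ) :
    (∃ D, NextRestart c i t D) ∨ ∀ s > t, ¬ Restarts c i s := by
  by_cases h : ∃ s, t < s ∧ Restarts c i s
  · exact .inl ⟨Nat.find h, Nat.find_spec h, fun r => Nat.find_min h⟩
  · exact .inr fun s hs hr => h ⟨s, hs, hr⟩

theorem follow_inl_of_nextRestart {c : Code} {i t D : ℕ} (hD : NextRestart c i t D) (x : ℕ) :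
    follow c (.inl (i, t)) x =
      Part.some ((snapshot c i D ++ [Nat.pair i t + 1])[x]?.getD 0) := by
  obtain ⟨hD₁, hD₂⟩ := hD
  by_cases h : ∃ s < D, (evaln s c (Nat.pair i x)).isSome
  · obtain ⟨hs, hsome⟩ := Nat.find_spec h
    obtain ⟨v, hv⟩ := Option.isSome_iff_exists.1 hsome
    refine rfindOpt_eq_some_of_first (n := Nat.find h) ?_ fun m hm => ?_
    · have h₁ := snapshot_getElem? hs.le hv
      have hx : x < (snapshot c i D).length := (List.getElem?_eq_some_iff.1 h₁).1
      rw [if_neg (hD₂ _ hs), hv, List.getElem?_append_left hx, h₁, Option.getD_some]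
    · rw [if_neg (hD₂ _ (hm.trans hs))]
      have := Nat.find_min h hm
      simpa [hm.trans hs] using this
  · push Not at h
    refine rfindOpt_eq_some_of_first (n := D) (if_pos hD₁) fun m hm => ?_
    rw [if_neg (hD₂ _ hm)]
    simpa using h m hm

theorem follow_inl_of_last {c : Code} {i t : ℕ} (h : ∀ s > t, ¬ Restarts c i s) :
    follow c (.inl (i, t)) = row c i := by
  funext x
  have hstep (s : ℕ) : ¬ (t < s ∧ Restarts c i s) := fun hs => h s hs.1 hs.2
  simp only [follow, hstep, if_false, row, eval_eq_rfindOpt]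

/-- Some follower turns into the function with index `q`. -/
def Claimed (c : Code) (q : List ℕ × ℕ × ℕ) : Prop :=
  q.2.2 = 0 ∧ q.2.1 ≠ 0 ∧
    Restarts c (q.2.1 - 1).unpair.1 (q.2.1 - 1).unpair.2 ∧
    NextRestart c (q.2.1 - 1).unpair.1 (q.2.1 - 1).unpair.2 q.1.length ∧
    q.1 = snapshot c (q.2.1 - 1).unpair.1 q.1.length

theorem claimed_iff {c : Code} {L : List ℕ} {k d : ℕ} : Claimed c (L, k, d) ↔
    ∃ i t D, Restarts c i t ∧ NextRestart c i t D ∧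
      L = snapshot c i D ∧ k = Nat.pair i t + 1 ∧ d = 0 := by
  constructor
  · rintro ⟨hd, hk, hr, hn, hL⟩
    exact ⟨_, _, _, hr, hn, hL, by simp; simp at hk; omega, hd⟩
  · rintro ⟨i, t, D, hr, hn, rfl, rfl, rfl⟩
    simp [Claimed, length_snapshot, hr, hn]

/-- The indices used by the auxiliary numbering. -/
def Valid (c : Code) : Index → Prop
  | .inl (i, t) => Restarts c i t
  | .inr (L, k, d) => k ≠ d ∧ ¬ Claimed c (L, k, d)

theorem primrecPred_claimed (c : Code) : PrimrecPred (Claimed c) := by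
  have hk : Primrec fun q : List ℕ × ℕ × ℕ => q.2.1 := Primrec.fst.comp Primrec.snd
  have hp : Primrec fun q : List ℕ × ℕ × ℕ => (q.2.1 - 1).unpair :=
    Primrec.unpair.comp (Primrec.pred.comp hk)
  have hi := Primrec.fst.comp hp
  have ht := Primrec.snd.comp hp
  have hl : Primrec fun q : List ℕ × ℕ × ℕ => q.1.length := Primrec.list_length.comp Primrec.fst
  have hlater : PrimrecRel fun (r : ℕ) (a : ℕ × ℕ) => ¬ (a.2 < r ∧ Restarts c a.1 r) :=
    ((Primrec.nat_lt.comp (Primrec.snd.comp Primrec.snd) Primrec.fst).and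
      ((primrecRel_restarts c).comp (Primrec.fst.comp Primrec.snd) Primrec.fst)).not
  have hnone := primrecRel_forall_lt hlater
  exact (Primrec.eq.comp (Primrec.snd.comp Primrec.snd) (Primrec.const 0)).and
    ((Primrec.eq.comp hk (Primrec.const 0)).not.and
      (((primrecRel_restarts c).comp hi ht).and
        ((((Primrec.nat_lt.comp ht hl).and ((primrecRel_restarts c).comp hi hl)).and
          (hnone.comp hl (hi.pair ht))).and
            (Primrec.eq.comp Primrec.fst ((primrec_snapshot c).comp hi hl)))))

theorem computablePred_valid (c : Code) : ComputablePred (Valid c) := by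
  classical
  have h₁ : PrimrecPred fun q : List ℕ × ℕ × ℕ => q.2.1 ≠ q.2.2 ∧ ¬ Claimed c q :=
    (Primrec.eq.comp (Primrec.fst.comp Primrec.snd) (Primrec.snd.comp Primrec.snd)).not.and
      (primrecPred_claimed c).not
  have h₂ : PrimrecPred fun q : ℕ × ℕ => Restarts c q.1 q.2 := primrecRel_restarts c
  refine Computable.computablePred (Primrec.to_comp ?_)
  refine (Primrec.sumCasesOn Primrec.id (h₂.decide.comp Primrec.snd).to₂
    (h₁.decide.comp Primrec.snd).to₂).of_eq fun x => ?_
  rcases x with ⟨i, t⟩ | ⟨L, k, d⟩ <;> exact decide_eq_decide.2 Iff.rfl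

theorem infinite_valid (c : Code) : {x | Valid c x}.Infinite := by
  refine Set.infinite_of_injective_forall_mem
    (f := fun n : ℕ => (Sum.inr (List.replicate n 0, 0, 1) : Index)) (fun m n h => ?_) fun n => ?_
  · simpa using congrArg (fun x : Index => x.elim (fun _ => 0) fun q => q.1.length) h
  · simp [Valid, Claimed]

theorem partrec₂_follow (c : Code) : Partrec₂ (follow c) := by
  have hget : Primrec₂ fun (q : List ℕ × ℕ × ℕ) (x : ℕ) => (q.1 ++ [q.2.1])[x]?.getD q.2.2 :=
    Primrec.option_getD.comp
      (Primrec.list_getElem?.comp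
        (Primrec.list_concat.comp (Primrec.fst.comp Primrec.fst)
          (Primrec.fst.comp (Primrec.snd.comp Primrec.fst))) Primrec.snd)
      (Primrec.snd.comp (Primrec.snd.comp Primrec.fst))
  have h₁ : Partrec₂ fun (a : Index × ℕ) (q : ℕ × ℕ) => follow c (.inl q) a.2 := by
    refine Partrec.rfindOpt (Primrec.to_comp ?_)
    have hx : Primrec fun a : ((Index × ℕ) × ℕ × ℕ) × ℕ => a.1.1.2 :=
      Primrec.snd.comp (Primrec.fst.comp Primrec.fst)
    have hi : Primrec fun a : ((Index × ℕ) × ℕ × ℕ) × ℕ => a.1.2.1 :=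
      Primrec.fst.comp (Primrec.snd.comp Primrec.fst)
    have ht : Primrec fun a : ((Index × ℕ) × ℕ × ℕ) × ℕ => a.1.2.2 :=
      Primrec.snd.comp (Primrec.snd.comp Primrec.fst)
    exact Primrec.ite
      ((Primrec.nat_lt.comp ht Primrec.snd).and
        ((primrecRel_restarts c).comp hi Primrec.snd))
      (Primrec.option_some.comp (hget.comp
        (((primrec_snapshot c).comp hi Primrec.snd).pair
          ((Primrec.succ.comp (Primrec₂.natPair.comp hi ht)).pair (Primrec.const 0))) hx))
      (primrec_evaln.comp ((Primrec.snd.pair (Primrec.const c)).pair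
        (Primrec₂.natPair.comp hi hx)))
  have h₂ : Partrec₂ fun (a : Index × ℕ) (q : List ℕ × ℕ × ℕ) => follow c (.inr q) a.2 :=
    Computable.partrec (hget.comp Primrec.snd (Primrec.snd.comp Primrec.fst)).to_comp
  refine (Partrec.sumCasesOn Computable.fst h₁ h₂).of_eq fun a => ?_
  rcases a with ⟨_ | _, x⟩ <;> rfl

/-- A valid index either follows a row forever or denotes the function with values `L`, `k`,
`d`, `d`, ..., and these data determine the index. -/
theorem Valid.cases {c : Code} {x : Index} (hx : Valid c x) :
    (∃ i t, x = .inl (i, t) ∧ Restarts c i t ∧ ∀ s > t, ¬ Restarts c i s) ∨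
    ∃ L k d, k ≠ d ∧ (∀ y, follow c x y = Part.some ((L ++ [k])[y]?.getD d)) ∧
      (Claimed c (L, k, d) ∧ x = .inl (k - 1).unpair ∨
        ¬ Claimed c (L, k, d) ∧ x = .inr (L, k, d)) := by
  rcases x with ⟨i, t⟩ | ⟨L, k, d⟩
  · rcases nextRestart_or c i t with ⟨D, hD⟩ | h
    · exact .inr ⟨_, _, _, Nat.succ_ne_zero _, follow_inl_of_nextRestart hD,
        .inl ⟨claimed_iff.2 ⟨i, t, D, hx, hD, rfl, rfl, rfl⟩, by simp⟩⟩
    · exact .inl ⟨i, t, rfl, hx, h⟩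
  · exact .inr ⟨L, k, d, hx.1, fun _ => rfl, .inr ⟨hx.2, rfl⟩⟩

theorem follow_ne_const {c : Code} (hc : ∀ i, ¬ EventuallyConst (row c i)) {x : Index}
    (hx : Valid c x) (e : ℕ) : follow c x ≠ fun _ => Part.some e := by
  intro h
  rcases hx.cases with ⟨i, t, rfl, -, hlast⟩ | ⟨L, k, d, hk, hval, -⟩
  · rw [follow_inl_of_last hlast] at h
    exact hc i ⟨[], e, fun y => by simp [h]⟩
  · exact not_const_of_ne hk fun y => Part.some_injective ((hval y).symm.trans (congrFun h y))

theorem follow_injOn {c : Code} (hc : ∀ i, ¬ EventuallyConst (row c i)) {x x' : Index}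
    (hx : Valid c x) (hx' : Valid c x') (h : follow c x = follow c x') : x = x' := by
  rcases hx.cases with ⟨i, t, rfl, hr, hlast⟩ | ⟨L, k, d, hk, hval, hor⟩ <;>
  rcases hx'.cases with ⟨i', t', rfl, hr', hlast'⟩ | ⟨L', k', d', hk', hval', hor'⟩
  · rw [follow_inl_of_last hlast, follow_inl_of_last hlast'] at h
    rcases lt_trichotomy i i' with hi | rfl | hi
    · obtain ⟨s, hs, hrs⟩ := exists_restarts_gt hi h t'
      exact (hlast' s hs hrs).elim
    · rcases lt_trichotomy t t' with ht | rfl | ht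
      · exact (hlast _ ht hr').elim
      · rfl
      · exact (hlast' _ ht hr).elim
    · obtain ⟨s, hs, hrs⟩ := exists_restarts_gt hi h.symm t
      exact (hlast s hs hrs).elim
  · rw [follow_inl_of_last hlast] at h
    exact (hc i ⟨_, _, fun y => by rw [h, hval', getD_append_singleton_self _ d' y]⟩).elim
  · rw [follow_inl_of_last hlast'] at h
    exact (hc i' ⟨_, _, fun y => by rw [← h, hval]⟩).elim
  · obtain ⟨rfl, rfl, rfl⟩ := normalForm_injective hk hk' fun y =>
      Part.some_injective ((hval y).symm.trans ((congrFun h y).trans (hval' y)))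
    rcases hor with ⟨h₁, rfl⟩ | ⟨h₁, rfl⟩ <;> rcases hor' with ⟨h₂, rfl⟩ | ⟨h₂, rfl⟩
    · rfl
    · exact (h₂ h₁).elim
    · exact (h₁ h₂).elim
    · rfl

theorem exists_follow_eq_row (c : Code) (i : ℕ) : ∃ x, Valid c x ∧ follow c x = row c i := by
  classical
  have hex : ∃ j, row c j = row c i := ⟨i, rfl⟩
  obtain ⟨t, hr, hlast⟩ := exists_last_restart (c := c) (i := Nat.find hex) fun j hj h =>
    Nat.find_min hex hj (h.trans (Nat.find_spec hex))
  exact ⟨.inl (Nat.find hex, t), hr, (follow_inl_of_last hlast).trans (Nat.find_spec hex)⟩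

theorem exists_follow_eq_normalForm (c : Code) {L : List ℕ} {k d : ℕ} (hk : k ≠ d) :
    ∃ x, Valid c x ∧ ∀ y, follow c x y = Part.some ((L ++ [k])[y]?.getD d) := by
  by_cases h : Claimed c (L, k, d)
  · obtain ⟨i, t, D, hr, hD, rfl, rfl, rfl⟩ := claimed_iff.1 h
    exact ⟨.inl (i, t), hr, follow_inl_of_nextRestart hD⟩
  · exact ⟨.inr (L, k, d), ⟨hk, h⟩, fun _ => rfl⟩

end FriedbergNumbering

open FriedbergNumbering

/-- There is a computable 1-1 enumeration of all unary partial computable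
functions with `ψ_{2x+1}(y) = x` for all `x`, `y`. -/
theorem exists_friedberg_numbering_fixing_constants :
    ∃ ψ : ℕ → ℕ →. ℕ,
      Partrec₂ ψ ∧
      (∀ f : ℕ →. ℕ, Partrec f → ∃ x : ℕ, ψ x = f) ∧
      Function.Injective ψ ∧
      ∀ x y : ℕ, ψ (2 * x + 1) y = Part.some x := by
  obtain ⟨c, hc, hsurj⟩ := exists_code_not_eventuallyConst
  obtain ⟨e, he, hinj, hrange⟩ :=
    exists_computable_injective_range_eq (computablePred_valid c) (infinite_valid c)
  have hvalid (n : ℕ) : Valid c (e n) := (hrange _).2 ⟨n, rfl⟩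
  let ψ : ℕ → ℕ →. ℕ := fun n y => bif n.bodd then Part.some n.div2 else follow c (e n.div2) y
  have hodd (x : ℕ) : ψ (2 * x + 1) = fun _ => Part.some x := by
    funext y
    simp [ψ, Nat.div2_val, show (2 * x + 1) / 2 = x by omega]
  have heven (x : ℕ) : ψ (2 * x) = follow c (e x) := by
    funext y
    simp [ψ, Nat.div2_val]
  refine ⟨ψ, ?_, fun f hf => ?_, fun m n hmn => ?_, fun x y => congrFun (hodd x) y⟩
  · have hdiv : Computable fun q : ℕ × ℕ => q.1.div2 := Computable.nat_div2.comp Computable.fst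
    exact Partrec.cond (Computable.nat_bodd.comp Computable.fst) hdiv.partrec
      ((partrec₂_follow c).comp (he.comp hdiv) Computable.snd)
  · have key : (∃ d, ∀ x, f x = Part.some d) ∨ ∃ x, Valid c x ∧ follow c x = f := by
      by_cases hf' : EventuallyConst f
      · refine hf'.eq_const_or.imp_right ?_
        rintro ⟨L, k, d, hk, hL⟩
        obtain ⟨x, hx, hval⟩ := exists_follow_eq_normalForm c (L := L) hk
        exact ⟨x, hx, funext fun y => (hval y).trans (hL y).symm⟩
      · obtain ⟨i, rfl⟩ := hsurj f hf hf'
        exact .inr (exists_follow_eq_row c i)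
    rcases key with ⟨d, hd⟩ | ⟨x, hx, rfl⟩
    · exact ⟨2 * d + 1, (hodd d).trans (funext fun x => (hd x).symm)⟩
    · obtain ⟨n, rfl⟩ := (hrange x).1 hx
      exact ⟨2 * n, heven n⟩
  · obtain ⟨a, rfl | rfl⟩ := Nat.even_or_odd' m <;> obtain ⟨b, rfl | rfl⟩ := Nat.even_or_odd' n
    · rw [heven, heven] at hmn
      rw [hinj (follow_injOn hc (hvalid a) (hvalid b) hmn)]
    · rw [heven, hodd] at hmn
      exact (follow_ne_const hc (hvalid a) b hmn).elim
    · rw [heven, hodd] at hmn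
      exact (follow_ne_const hc (hvalid b) a hmn.symm).elim
    · rw [hodd, hodd] at hmn
      rw [Part.some_injective (congrFun hmn 0)]
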